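/- If v > 0 and max_{k∈V} ‖Y_k − c_k‖_∞ ≤ L for some L ∈ (0,∞), then d_K(W, N(0,1)) ≤ max{ 68.5 · (D+1)² · 𝒜₃ / v³ , 22.88 · L·(D+1) / v }. -/

import Mathlib

open MeasureTheory ProbabilityTheory Filter

noncomputable section

/-- `G` is a dependency graph of the family `Y`: whenever `V₁, V₂` are disjoint sets of
vertices with no edge of `G` between them, the families `(Y k)_{k ∈ V₁}` and
`(Y k)_{k ∈ V₂}` are independent. -/
def IsDependencyGraph {Ω V E : Type*} [MeasurableSpace Ω] [MeasurableSpace E]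
    (μ : Measure Ω) (G : SimpleGraph V) (Y : V → Ω → E) : Prop :=
  ∀ V₁ V₂ : Set V, Disjoint V₁ V₂ →
    (∀ i ∈ V₁, ∀ j ∈ V₂, ¬ G.Adj i j) →
    IndepFun (fun ω (i : V₁) => Y i.1 ω) (fun ω (j : V₂) => Y j.1 ω) μ

/-- Kolmogorov distance between the law of `W` under `μ` and the standard normal law. -/
def dKolNormal {Ω : Type*} [MeasurableSpace Ω] (μ : Measure Ω) (W : Ω → ℝ) : ℝ :=
  ⨆ t : ℝ, |(μ {ω | W ω ≤ t}).toReal - (gaussianReal 0 1 (Set.Iic t)).toReal|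


/-- Mills-type bounds for the upper tail integral. -/
lemma st_int : Integrable (fun x : ℝ => Real.exp (-x^2/2)) := by
  have := integrable_exp_neg_mul_sq (b := 1/2) (by norm_num)
  refine this.congr (Eventually.of_forall fun x => ?_)
  simp only; congr 1; ring

lemma st_half : ∫ x in Set.Ioi (0:ℝ), Real.exp (-x^2/2) ≤ 1.26 := by
  have h := integral_gaussian_Ioi (1/2)
  have e : (fun x : ℝ => Real.exp (-x^2/2)) = fun x => Real.exp (-(1/2) * x^2) := by
    funext x; congr 1; ring
  rw [e, h]
  have : √(Real.pi / (1/2)) ≤ 2.52 := by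
    apply Real.sqrt_le_iff.mpr
    constructor
    · norm_num
    · have := Real.pi_lt_d2; norm_num at *; linarith
  linarith

lemma st_shift (w : ℝ) (hw : 0 ≤ w) :
    ∫ x in Set.Ioi w, Real.exp (-x^2/2) ≤ 1.26 * Real.exp (-w^2/2) := by
  have h1 : ∫ x in Set.Ioi w, Real.exp (-x^2/2)
      = ∫ x in Set.Ioi (0:ℝ), Real.exp (-(x+w)^2/2) := by
    have := (measurePreserving_add_right volume w).setIntegral_preimage_emb
      (measurableEmbedding_addRight w) (fun x : ℝ => Real.exp (-x^2/2)) (Set.Ioi w)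
    simp only [Set.preimage_add_const_Ioi, sub_self] at this
    exact this.symm
  rw [h1]
  calc _ ≤ ∫ x in Set.Ioi (0:ℝ), Real.exp (-x^2/2) * Real.exp (-w^2/2) := by
        apply setIntegral_mono_on
        · exact (st_int.comp_add_right w).integrableOn
        · exact (st_int.mul_const _).integrableOn
        · exact measurableSet_Ioi
        · intro x hx
          rw [← Real.exp_add]
          apply Real.exp_le_exp.mpr
          have : 0 < x := hx
          nlinarith
    _ = (∫ x in Set.Ioi (0:ℝ), Real.exp (-x^2/2)) * Real.exp (-w^2/2) := by
        rw [integral_mul_const]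
    _ ≤ _ := by
        gcongr
        exact st_half

lemma st_mills (w : ℝ) (hw : 0 ≤ w) :
    w * ∫ x in Set.Ioi w, Real.exp (-x^2/2) ≤ Real.exp (-w^2/2) := by
  have hd : ∀ x ∈ Set.Ici w, HasDerivAt (fun x : ℝ => -Real.exp (-x^2/2))
      (x * Real.exp (-x^2/2)) x := by
    intro x _
    have h1 : HasDerivAt (fun x : ℝ => -x^2/2) (-x) x := by
      have := ((hasDerivAt_pow 2 x).neg).div_const 2
      refine this.congr_deriv ?_
      simp; ring
    refine h1.exp.neg.congr_deriv ?_
    ring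
  have ht : Tendsto (fun x : ℝ => -Real.exp (-x^2/2)) atTop (nhds 0) := by
    have : Tendsto (fun x : ℝ => -x^2/2) atTop atBot := by
      have h := (tendsto_pow_atTop (α := ℝ) (n := 2) (by norm_num))
      have h2 := tendsto_neg_atTop_atBot.comp (h.atTop_div_const (r := 2) (by norm_num))
      refine h2.congr fun x => ?_
      simp; ring
    simpa using (Real.tendsto_exp_atBot.comp this).neg
  have hpos : ∀ x ∈ Set.Ioi w, 0 ≤ x * Real.exp (-x^2/2) := fun x hx => by
    have : w < x := hx
    have : 0 ≤ x := by linarith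
    positivity
  have hi := integrableOn_Ioi_deriv_of_nonneg' hd hpos ht
  have hI := integral_Ioi_of_hasDerivAt_of_nonneg' hd hpos ht
  rw [← integral_const_mul]
  calc _ ≤ ∫ x in Set.Ioi w, x * Real.exp (-x^2/2) := by
        apply setIntegral_mono_on (st_int.const_mul w).integrableOn hi measurableSet_Ioi
        intro x hx
        have : w ≤ x := le_of_lt hx
        gcongr
    _ = _ := by rw [hI]; simp

/-- bounds on the weighted tail integral -/
lemma st_tail (g : ℝ → ℝ) (hg : Continuous g) (m : ℝ) (hm0 : 0 ≤ m) (hm1 : m ≤ 1)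
    (h0 : ∀ x, -m ≤ g x) (h1 : ∀ x, g x ≤ 1 - m) (w : ℝ) (hw : 0 ≤ w) :
    let F := Real.exp (w^2/2) * ∫ x in Set.Ioi w, g x * Real.exp (-x^2/2)
    |F| ≤ 1.26 ∧ -m ≤ w * F ∧ w * F ≤ 1 - m := by
  intro F
  set Q := ∫ x in Set.Ioi w, Real.exp (-x^2/2) with hQ
  have hQ0 : 0 ≤ Q := integral_nonneg fun x => (Real.exp_pos _).le
  have hgi : Integrable (fun x => g x * Real.exp (-x^2/2)) := by
    refine st_int.bdd_mul (c := 1) hg.aestronglyMeasurable (Eventually.of_forall fun x => ?_)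
    rw [Real.norm_eq_abs, abs_le]
    constructor <;> linarith [h0 x, h1 x]
  set I := ∫ x in Set.Ioi w, g x * Real.exp (-x^2/2) with hI
  have hl : -m * Q ≤ I := by
    rw [hQ, ← integral_const_mul]
    apply setIntegral_mono (st_int.const_mul _).integrableOn hgi.integrableOn
    intro x; exact mul_le_mul_of_nonneg_right (h0 x) (Real.exp_pos _).le
  have hu : I ≤ (1-m) * Q := by
    rw [hQ, ← integral_const_mul]
    apply setIntegral_mono hgi.integrableOn (st_int.const_mul _).integrableOn
    intro x; exact mul_le_mul_of_nonneg_right (h1 x) (Real.exp_pos _).le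
  have hE : Real.exp (w^2/2) * Real.exp (-w^2/2) = 1 := by
    rw [← Real.exp_add]; ring_nf; simp
  have e0 := Real.exp_pos (w^2/2)
  have a1 : Real.exp (w^2/2) * Q ≤ 1.26 := by
    have := mul_le_mul_of_nonneg_left (st_shift w hw) e0.le
    nlinarith
  have a2 : w * (Real.exp (w^2/2) * Q) ≤ 1 := by
    have := mul_le_mul_of_nonneg_left (st_mills w hw) e0.le
    nlinarith
  have a0 : 0 ≤ Real.exp (w^2/2) * Q := by positivity
  have a3 : 0 ≤ w * (Real.exp (w^2/2) * Q) := by positivity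
  have b1 : -m * (Real.exp (w^2/2) * Q) ≤ F := by
    have := mul_le_mul_of_nonneg_left hl e0.le
    simp only [F]; nlinarith
  have b2 : F ≤ (1-m) * (Real.exp (w^2/2) * Q) := by
    have := mul_le_mul_of_nonneg_left hu e0.le
    simp only [F]; nlinarith
  refine ⟨abs_le.mpr ⟨by nlinarith, by nlinarith⟩, ?_, ?_⟩
  · have := mul_le_mul_of_nonneg_left b1 hw
    nlinarith
  · have := mul_le_mul_of_nonneg_left b2 hw
    nlinarith

lemma st_gauss (h : ℝ → ℝ) : ∫ x, h x ∂(gaussianReal 0 1) =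
    (√(2*Real.pi))⁻¹ * ∫ x, h x * Real.exp (-x^2/2) := by
  rw [integral_gaussianReal_eq_integral_smul (by norm_num), ← integral_const_mul]
  congr 1; funext x
  simp [gaussianPDFReal]; ring

lemma st_tot : ∫ x, Real.exp (-x^2/2) = √(2*Real.pi) := by
  have h := integral_gaussian (1/2)
  have e : (fun x : ℝ => Real.exp (-x^2/2)) = fun x => Real.exp (-(1/2) * x^2) := by
    funext x; congr 1; ring
  rw [e, h]; congr 1; ring

lemma stein_solution (h : ℝ → ℝ) (hc : Continuous h) (h0 : ∀ x, 0 ≤ h x) (h1 : ∀ x, h x ≤ 1) :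
    ∃ f f' : ℝ → ℝ, (∀ w, HasDerivAt f (f' w) w) ∧
      (∀ w, f' w = w * f w + h w - ∫ x, h x ∂(gaussianReal 0 1)) ∧
      (∀ w, |f w| ≤ 1.26) ∧ (∀ w, |f' w| ≤ 1) := by
  set m := ∫ x, h x ∂(gaussianReal 0 1) with hm
  have hm0 : 0 ≤ m := integral_nonneg h0
  have hm1 : m ≤ 1 := by
    have hi : Integrable h (gaussianReal 0 1) := by
      refine Integrable.of_bound hc.aestronglyMeasurable 1 (Eventually.of_forall fun x => ?_)
      rw [Real.norm_eq_abs, abs_le]; constructor <;> linarith [h0 x, h1 x]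
    calc m ≤ ∫ x, (1:ℝ) ∂(gaussianReal 0 1) := integral_mono hi (integrable_const _) h1
      _ = 1 := by simp
  set g : ℝ → ℝ := fun x => h x - m with hg
  have hgc : Continuous g := by fun_prop
  have hgl : ∀ x, -m ≤ g x := fun x => by simp only [hg]; linarith [h0 x]
  have hgu : ∀ x, g x ≤ 1 - m := fun x => by simp only [hg]; linarith [h1 x]
  set G : ℝ → ℝ := fun x => g x * Real.exp (-x^2/2) with hG
  have hGc : Continuous G := by fun_prop
  have hGi : Integrable G := by
    refine st_int.bdd_mul (c := 1) hgc.aestronglyMeasurable (Eventually.of_forall fun x => ?_)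
    rw [Real.norm_eq_abs, abs_le]
    constructor <;> linarith [hgl x, hgu x]
  have htot : ∫ x, G x = 0 := by
    have hhi : Integrable (fun x => h x * Real.exp (-x^2/2)) := by
      refine st_int.bdd_mul (c := 1) hc.aestronglyMeasurable (Eventually.of_forall fun x => ?_)
      rw [Real.norm_eq_abs, abs_le]; constructor <;> linarith [h0 x, h1 x]
    have : G = fun x => h x * Real.exp (-x^2/2) - m * Real.exp (-x^2/2) := by
      funext x; simp only [hG, hg]; ring
    rw [this, integral_sub hhi (st_int.const_mul m), integral_const_mul, st_tot, hm, st_gauss]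
    have : √(2*Real.pi) ≠ 0 := by positivity
    field_simp; ring
  set f : ℝ → ℝ := fun w => Real.exp (w^2/2) * ∫ x in Set.Iic w, G x with hf
  have hneg : ∀ w, f w = -(Real.exp (w^2/2) * ∫ x in Set.Ioi w, G x) := by
    intro w
    have := intervalIntegral.integral_Iic_add_Ioi (b := w) hGi.integrableOn hGi.integrableOn
    rw [htot] at this
    simp only [hf]
    rw [eq_neg_of_add_eq_zero_left this]; ring
  have hb : ∀ w, |f w| ≤ 1.26 ∧ -(1-m) ≤ w * f w ∧ w * f w ≤ m := by
    intro w
    rcases le_total 0 w with hw | hw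
    · obtain ⟨a, b, c⟩ := st_tail g hgc m hm0 hm1 hgl hgu w hw
      have e := hneg w
      refine ⟨by rw [e, abs_neg]; exact a, ?_, ?_⟩ <;> rw [e] <;> simp only [hG] <;> linarith
    · obtain ⟨a, b, c⟩ := st_tail (fun x => g (-x)) (by fun_prop) m hm0 hm1 (fun x => hgl _)
        (fun x => hgu _) (-w) (by linarith)
      have e : f w = Real.exp ((-w)^2/2) * ∫ x in Set.Ioi (-w), g (-x) * Real.exp (-x^2/2) := by
        simp only [hf, hG]
        have := integral_comp_neg_Ioi (-w) (fun x => g x * Real.exp (-x^2/2))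
        simp only [neg_neg, neg_sq] at this ⊢
        rw [← this]
      rw [← e] at a b c
      refine ⟨a, ?_, ?_⟩ <;> linarith
  refine ⟨f, fun w => w * f w + h w - m, ?_, fun w => rfl, fun w => (hb w).1, ?_⟩
  · intro w
    have hd1 : HasDerivAt (fun w => ∫ x in Set.Iic w, G x) (G w) w := by
      have e : (fun w => ∫ x in Set.Iic w, G x) =
          fun w => (∫ x in Set.Iic (0:ℝ), G x) + ∫ x in (0:ℝ)..w, G x := by
        funext w
        have := intervalIntegral.integral_Iic_sub_Iic (a := 0) (b := w) (hGi.integrableOn)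
          (hGi.integrableOn)
        linarith
      rw [e]
      exact (intervalIntegral.integral_hasDerivAt_right (hGc.intervalIntegrable _ _)
        hGc.aestronglyMeasurable.stronglyMeasurableAtFilter hGc.continuousAt).const_add _
    have hd2 : HasDerivAt (fun x : ℝ => Real.exp (x^2/2)) (Real.exp (w^2/2) * w) w := by
      have h1 : HasDerivAt (fun x : ℝ => x^2/2) w w := by
        have := ((hasDerivAt_pow 2 w)).div_const 2
        refine this.congr_deriv ?_
        simp
      exact h1.exp
    refine (hd2.mul hd1).congr_deriv ?_
    have hE : Real.exp (w^2/2) * Real.exp (-w^2/2) = 1 := by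
      rw [← Real.exp_add]; ring_nf; simp
    simp only [hf, hG, hg]
    linear_combination (h w - m) * hE
  · intro w
    obtain ⟨_, b, c⟩ := hb w
    rw [abs_le]
    constructor <;> linarith [h0 w, h1 w]

/-- piecewise linear ramp: `1` left of `z`, `0` right of `z + ε`. -/
def ramp (z ε w : ℝ) : ℝ := max 0 (min 1 (1 - (w - z) / ε))

lemma ramp_cont (z ε : ℝ) : Continuous (ramp z ε) := by
  unfold ramp; fun_prop

lemma ramp_nonneg (z ε w : ℝ) : 0 ≤ ramp z ε w := le_max_left _ _

lemma ramp_le_one (z ε w : ℝ) : ramp z ε w ≤ 1 := by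
  unfold ramp; simp

lemma ramp_left (z ε w : ℝ) (hε : 0 < ε) (h : w ≤ z) : ramp z ε w = 1 := by
  unfold ramp
  have : (w - z)/ε ≤ 0 := div_nonpos_of_nonpos_of_nonneg (by linarith) hε.le
  rw [min_eq_left (by linarith)]; simp

lemma ramp_right (z ε w : ℝ) (hε : 0 < ε) (h : z + ε ≤ w) : ramp z ε w = 0 := by
  unfold ramp
  have : 1 ≤ (w - z)/ε := by rw [le_div_iff₀ hε]; linarith
  apply max_eq_left
  exact (min_le_right _ _).trans (by linarith)

lemma ramp_mid (z ε w : ℝ) (hε : 0 < ε) (h1 : z ≤ w) (h2 : w ≤ z + ε) :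
    ramp z ε w = 1 - (w - z)/ε := by
  unfold ramp
  have a : 0 ≤ (w - z)/ε := div_nonneg (by linarith) hε.le
  have b : (w - z)/ε ≤ 1 := by rw [div_le_iff₀ hε]; linarith
  rw [min_eq_right (by linarith), max_eq_right (by linarith)]

lemma ramp_lip (z ε x y : ℝ) (hε : 0 < ε) : |ramp z ε x - ramp z ε y| ≤ |x - y| / ε := by
  unfold ramp
  refine (abs_max_sub_max_le_max 0 _ 0 _).trans ?_
  simp only [sub_self, abs_zero]
  apply max_le (by positivity)
  have h1 := abs_min_sub_min_le_max 1 (1 - (x - z) / ε) 1 (1 - (y - z) / ε)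
  refine h1.trans ?_
  simp only [sub_self, abs_zero]
  apply max_le (by positivity)
  have : 1 - (x - z) / ε - (1 - (y - z) / ε) = -((x - y)/ε) := by ring
  rw [this, abs_neg, abs_div, abs_of_pos hε]

open Classical in
/-- the local Lipschitz weight -/
def psi (z ε ρ w : ℝ) : ℝ :=
  1.26 + |w| + ρ + (1/ε) * (Set.Ioc (z - ρ) (z + ε + ρ)).indicator (fun _ => (1:ℝ)) w

lemma stein_lip (z ε : ℝ) (hε : 0 < ε) (f f' : ℝ → ℝ) (m : ℝ)
    (hd : ∀ w, HasDerivAt f (f' w) w)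
    (hf' : ∀ w, f' w = w * f w + ramp z ε w - m)
    (hf : ∀ w, |f w| ≤ 1.26) (hb : ∀ w, |f' w| ≤ 1)
    (ρ w x y : ℝ) (hx : |x - w| ≤ ρ) (hy : |y - w| ≤ ρ) :
    |f' x - f' y| ≤ |x - y| * psi z ε ρ w := by
  have hx' := abs_le.mp hx
  have hy' := abs_le.mp hy
  have h1 : |x * f x - y * f y| ≤ (1.26 + |w| + ρ) * |x - y| := by
    have := (convex_Icc (w - ρ) (w + ρ)).norm_image_sub_le_of_norm_hasDerivWithin_le
      (f := fun x => x * f x) (f' := fun x => 1 * f x + x * f' x) (C := 1.26 + |w| + ρ)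
      (x := y) (y := x)
      (fun u _ => ((hasDerivAt_id u).mul (hd u)).hasDerivWithinAt) ?_
      ⟨by linarith, by linarith⟩ ⟨by linarith, by linarith⟩
    · simpa using this
    · intro u hu
      rw [Real.norm_eq_abs]
      have hu1 : |u| ≤ |w| + ρ := by
        have : |u - w| ≤ ρ := abs_le.mpr ⟨by linarith [hu.1], by linarith [hu.2]⟩
        calc |u| = |w + (u - w)| := by ring_nf
          _ ≤ |w| + |u - w| := abs_add_le _ _
          _ ≤ _ := by linarith
      calc |1 * f u + u * f' u| ≤ |f u| + |u| * |f' u| := by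
            rw [one_mul, ← abs_mul]; exact abs_add_le _ _
        _ ≤ 1.26 + |u| * 1 := by
            gcongr
            · exact hf u
            · exact hb u
        _ ≤ _ := by linarith
  have h2 : |ramp z ε x - ramp z ε y| ≤ |x - y| * ((1/ε) *
      (Set.Ioc (z - ρ) (z + ε + ρ)).indicator (fun _ => (1:ℝ)) w) := by
    by_cases hw : w ∈ Set.Ioc (z - ρ) (z + ε + ρ)
    · rw [Set.indicator_of_mem hw]
      have := ramp_lip z ε x y hε
      calc _ ≤ _ := this
        _ = _ := by ring
    · rw [Set.indicator_of_notMem hw]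
      rw [Set.mem_Ioc, not_and_or, not_lt, not_le] at hw
      rcases hw with hw | hw
      · rw [ramp_left z ε x hε (by linarith), ramp_left z ε y hε (by linarith)]; simp
      · rw [ramp_right z ε x hε (by linarith), ramp_right z ε y hε (by linarith)]; simp
  calc |f' x - f' y| = |(x * f x - y * f y) + (ramp z ε x - ramp z ε y)| := by
        rw [hf', hf']; ring_nf
    _ ≤ _ := abs_add_le _ _
    _ ≤ _ := by unfold psi; nlinarith

/-! Gaussian estimates -/

lemma pdf_le : (√(2*Real.pi))⁻¹ ≤ 0.4 := by
  have : (2.5:ℝ) ≤ √(2*Real.pi) := by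
    apply Real.le_sqrt_of_sq_le
    have := Real.pi_gt_d4; norm_num at *; linarith
  calc (√(2*Real.pi))⁻¹ ≤ (2.5:ℝ)⁻¹ := by gcongr
    _ = 0.4 := by norm_num

lemma gauss_le (u : ℝ → ℝ) (hu : Integrable u) (h0 : ∀ x, 0 ≤ u x) :
    ∫ x, u x ∂(gaussianReal 0 1) ≤ 0.4 * ∫ x, u x := by
  rw [st_gauss]
  have h1 : ∫ x, u x * Real.exp (-x^2/2) ≤ ∫ x, u x := by
    apply integral_mono_of_nonneg
    · exact Eventually.of_forall fun x => mul_nonneg (h0 x) (Real.exp_pos _).le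
    · exact hu
    · refine Eventually.of_forall fun x => ?_
      have : Real.exp (-x^2/2) ≤ 1 := Real.exp_le_one_iff.mpr (by nlinarith [sq_nonneg x])
      simpa using mul_le_mul_of_nonneg_left this (h0 x)
  have h2 : 0 ≤ ∫ x, u x := integral_nonneg h0
  have h3 : 0 ≤ ∫ x, u x * Real.exp (-x^2/2) :=
    integral_nonneg fun x => mul_nonneg (h0 x) (Real.exp_pos _).le
  exact mul_le_mul pdf_le h1 h3 (by norm_num)

/-- standard normal cdf -/
def gcdf (t : ℝ) : ℝ := (gaussianReal 0 1 (Set.Iic t)).toReal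

lemma gcdf_eq (t : ℝ) : gcdf t = ∫ x, (Set.Iic t).indicator (fun _ => (1:ℝ)) x ∂(gaussianReal 0 1) := by
  rw [integral_indicator measurableSet_Iic]
  simp [gcdf, Measure.real]

lemma gcdf_sub (α β : ℝ) (h : α ≤ β) : gcdf β - gcdf α ≤ 0.4 * (β - α) := by
  rw [gcdf_eq, gcdf_eq, ← integral_sub
    ((integrable_const _).indicator measurableSet_Iic) ((integrable_const _).indicator measurableSet_Iic)]
  have e : ∀ x, (Set.Iic β).indicator (fun _ => (1:ℝ)) x - (Set.Iic α).indicator (fun _ => (1:ℝ)) x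
      = (Set.Ioc α β).indicator (fun _ => (1:ℝ)) x := by
    intro x
    by_cases h1 : x ≤ α
    · have : x ≤ β := h1.trans h
      simp [Set.indicator, h1, this, not_lt.mpr h1]
    · by_cases h2 : x ≤ β
      · simp [Set.indicator, h1, h2, not_le.mp h1]
      · simp [Set.indicator, h1, h2]
  simp_rw [e]
  refine (gauss_le _ ?_ ?_).trans ?_
  · exact (integrableOn_const (by simp)).integrable_indicator measurableSet_Ioc
  · intro x; exact Set.indicator_nonneg (fun _ _ => zero_le_one) x
  · rw [integral_indicator measurableSet_Ioc]
    simp [h]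

lemma ramp_int (z ε : ℝ) : Integrable (ramp z ε) (gaussianReal 0 1) := by
  refine Integrable.of_bound (ramp_cont z ε).aestronglyMeasurable 1 (Eventually.of_forall fun x => ?_)
  rw [Real.norm_eq_abs, abs_of_nonneg (ramp_nonneg _ _ _)]; exact ramp_le_one _ _ _

lemma lin_int (z ε : ℝ) (hε : 0 < ε) : ∫ x in Set.Ioc z (z+ε), (x - z)/ε = ε/2 := by
  rw [← intervalIntegral.integral_of_le (by linarith)]
  rw [intervalIntegral.integral_div, intervalIntegral.integral_sub (by simp) (by simp)]
  simp
  field_simp; ring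

lemma ramp_upper (z ε : ℝ) (hε : 0 < ε) :
    ∫ x, ramp z ε x ∂(gaussianReal 0 1) - gcdf z ≤ 0.2 * ε := by
  rw [gcdf_eq, ← integral_sub (ramp_int z ε) ((integrable_const _).indicator measurableSet_Iic)]
  have e : ∀ x, ramp z ε x - (Set.Iic z).indicator (fun _ => (1:ℝ)) x
      = (Set.Ioc z (z+ε)).indicator (fun x => 1 - (x - z)/ε) x := by
    intro x
    by_cases h1 : x ≤ z
    · simp [Set.indicator, h1, not_lt.mpr h1, ramp_left z ε x hε h1]
    · by_cases h2 : x ≤ z + ε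
      · simp [Set.indicator, h1, h2, not_le.mp h1, ramp_mid z ε x hε (not_le.mp h1).le h2]
      · simp [Set.indicator, h1, h2, ramp_right z ε x hε (not_le.mp h2).le]
  simp_rw [e]
  have hc : IntegrableOn (fun x => 1 - (x - z)/ε) (Set.Ioc z (z+ε)) :=
    (Continuous.integrableOn_Icc (by fun_prop)).mono_set Set.Ioc_subset_Icc_self
  have hc' : IntegrableOn (fun x => (x - z)/ε) (Set.Ioc z (z+ε)) :=
    (Continuous.integrableOn_Icc (by fun_prop)).mono_set Set.Ioc_subset_Icc_self
  refine (gauss_le _ ?_ ?_).trans ?_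
  · exact hc.integrable_indicator measurableSet_Ioc
  · intro x; refine Set.indicator_nonneg (fun x hx => ?_) x
    have : (x - z)/ε ≤ 1 := by rw [div_le_iff₀ hε]; linarith [hx.2]
    linarith
  · rw [integral_indicator measurableSet_Ioc, integral_sub (integrable_const _) hc',
      lin_int z ε hε]
    simp [hε.le]; linarith

lemma ramp_lower (z ε : ℝ) (hε : 0 < ε) :
    gcdf (z + ε) - ∫ x, ramp z ε x ∂(gaussianReal 0 1) ≤ 0.2 * ε := by
  rw [gcdf_eq, ← integral_sub ((integrable_const _).indicator measurableSet_Iic) (ramp_int z ε)]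
  have e : ∀ x, (Set.Iic (z+ε)).indicator (fun _ => (1:ℝ)) x - ramp z ε x
      = (Set.Ioc z (z+ε)).indicator (fun x => (x - z)/ε) x := by
    intro x
    by_cases h1 : x ≤ z
    · have : x ≤ z + ε := by linarith
      simp [Set.indicator, this, not_lt.mpr h1, ramp_left z ε x hε h1]
    · by_cases h2 : x ≤ z + ε
      · simp [Set.indicator, h2, not_le.mp h1, ramp_mid z ε x hε (not_le.mp h1).le h2]
      · simp [Set.indicator, h2, ramp_right z ε x hε (not_le.mp h2).le]
  simp_rw [e]
  have hc' : IntegrableOn (fun x => (x - z)/ε) (Set.Ioc z (z+ε)) :=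
    (Continuous.integrableOn_Icc (by fun_prop)).mono_set Set.Ioc_subset_Icc_self
  refine (gauss_le _ ?_ ?_).trans ?_
  · exact hc'.integrable_indicator measurableSet_Ioc
  · intro x; refine Set.indicator_nonneg (fun x hx => ?_) x
    exact div_nonneg (by linarith [hx.1]) hε.le
  · rw [integral_indicator measurableSet_Ioc, lin_int z ε hε]
    linarith

set_option linter.unusedSectionVars false
set_option linter.unusedVariables false

section core

variable {Ω V : Type*} [MeasurableSpace Ω] [Fintype V]

/-- bounded measurable -/
def BM (f : Ω → ℝ) : Prop := Measurable f ∧ ∃ C, ∀ ω, |f ω| ≤ C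

lemma BM.integrable {f : Ω → ℝ} (h : BM f) (μ : Measure Ω) [IsProbabilityMeasure μ] :
    Integrable f μ := by
  obtain ⟨hm, C, hC⟩ := h
  exact Integrable.of_bound hm.aestronglyMeasurable C (Eventually.of_forall hC)

lemma BM.const (c : ℝ) : BM (fun _ : Ω => c) := ⟨measurable_const, |c|, fun _ => le_rfl⟩

lemma BM.add {f g : Ω → ℝ} (hf : BM f) (hg : BM g) : BM (fun ω => f ω + g ω) := by
  obtain ⟨hm, C, hC⟩ := hf
  obtain ⟨hm', C', hC'⟩ := hg
  exact ⟨hm.add hm', C + C', fun ω => (abs_add_le _ _).trans (add_le_add (hC ω) (hC' ω))⟩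

lemma BM.neg {f : Ω → ℝ} (hf : BM f) : BM (fun ω => - f ω) := by
  obtain ⟨hm, C, hC⟩ := hf
  exact ⟨hm.neg, C, fun ω => by rw [abs_neg]; exact hC ω⟩

lemma BM.sub {f g : Ω → ℝ} (hf : BM f) (hg : BM g) : BM (fun ω => f ω - g ω) := by
  simpa [sub_eq_add_neg] using hf.add hg.neg

lemma BM.mul {f g : Ω → ℝ} (hf : BM f) (hg : BM g) : BM (fun ω => f ω * g ω) := by
  obtain ⟨hm, C, hC⟩ := hf
  obtain ⟨hm', C', hC'⟩ := hg
  refine ⟨hm.mul hm', C * C', fun ω => ?_⟩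
  rw [abs_mul]
  exact mul_le_mul (hC ω) (hC' ω) (abs_nonneg _) ((abs_nonneg _).trans (hC ω))

lemma BM.abs {f : Ω → ℝ} (hf : BM f) : BM (fun ω => |f ω|) := by
  obtain ⟨hm, C, hC⟩ := hf
  exact ⟨hm.abs, C, fun ω => by rw [abs_abs]; exact hC ω⟩

lemma BM.sum {ι : Type*} (s : Finset ι) {f : ι → Ω → ℝ} (hf : ∀ i, BM (f i)) :
    BM (fun ω => ∑ i ∈ s, f i ω) := by
  classical
  induction s using Finset.induction_on with
  | empty => simpa using BM.const (Ω := Ω) 0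
  | insert a s ha ih => simpa [Finset.sum_insert ha] using (hf a).add ih

lemma BM.int_add {f g : Ω → ℝ} (hf : BM f) (hg : BM g) (μ : Measure Ω) [IsProbabilityMeasure μ] :
    ∫ ω, (f ω + g ω) ∂μ = (∫ ω, f ω ∂μ) + ∫ ω, g ω ∂μ :=
  integral_add (hf.integrable μ) (hg.integrable μ)

lemma BM.int_sub {f g : Ω → ℝ} (hf : BM f) (hg : BM g) (μ : Measure Ω) [IsProbabilityMeasure μ] :
    ∫ ω, (f ω - g ω) ∂μ = (∫ ω, f ω ∂μ) - ∫ ω, g ω ∂μ :=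
  integral_sub (hf.integrable μ) (hg.integrable μ)

lemma BM.int_sum {ι : Type*} (s : Finset ι) {f : ι → Ω → ℝ} (hf : ∀ i, BM (f i))
    (μ : Measure Ω) [IsProbabilityMeasure μ] :
    ∫ ω, (∑ i ∈ s, f i ω) ∂μ = ∑ i ∈ s, ∫ ω, f i ω ∂μ :=
  integral_finsetSum _ fun i _ => (hf i).integrable μ

lemma BM.comp {f : Ω → ℝ} (hf : BM f) {q : ℝ → ℝ} (hq : Measurable q) {C : ℝ}
    (hC : ∀ x, |q x| ≤ C) : BM (fun ω => q (f ω)) :=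
  ⟨hq.comp hf.1, C, fun ω => hC _⟩

/-- the centred sum -/
def WW (μ : Measure Ω) (ξ : V → Ω → ℝ) (ω : Ω) : ℝ := ∑ k, (ξ k ω - ∫ ω', ξ k ω' ∂μ)

/-- partial sum -/
def RR (ξ : V → Ω → ℝ) (s : Finset V) (ω : Ω) : ℝ := ∑ k ∈ s, ξ k ω

/-- The normalised setting. -/
structure Core [DecidableEq V] (μ : Measure Ω) (ξ : V → Ω → ℝ) (nb : V → Finset V) (β d : ℝ) : Prop where
  meas : ∀ k, Measurable (ξ k)
  bdd : ∀ k ω, |ξ k ω| ≤ β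
  hβ : 0 < β
  hd : 0 < d
  card : ∀ k, ((nb k).card : ℝ) ≤ d
  symm : ∀ k l, l ∈ nb k ↔ k ∈ nb l
  indep : ∀ k j l, IndepFun (fun ω => (ξ k ω, ξ j ω, ξ l ω))
    (fun ω => ∑ m ∈ Finset.univ \ (nb k ∪ nb j ∪ nb l), ξ m ω) μ
  var : ∫ ω, WW μ ξ ω * WW μ ξ ω ∂μ = 1

variable [DecidableEq V] {μ : Measure Ω} [IsProbabilityMeasure μ] {ξ : V → Ω → ℝ}
  {nb : V → Finset V} {β d : ℝ}

lemma Core.bm (H : Core μ ξ nb β d) (k : V) : BM (ξ k) := ⟨H.meas k, β, H.bdd k⟩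

lemma Core.bmW (H : Core μ ξ nb β d) : BM (WW μ ξ) :=
  BM.sum _ fun k => (H.bm k).sub (BM.const _)

lemma Core.bmR (H : Core μ ξ nb β d) (s : Finset V) : BM (RR ξ s) :=
  BM.sum _ fun k => (H.bm k)

lemma RR_abs_le (s : Finset V) (ω : Ω) : |RR ξ s ω| ≤ ∑ k ∈ s, |ξ k ω| :=
  Finset.abs_sum_le_sum_abs _ _

lemma Core.R_le (H : Core μ ξ nb β d) (s : Finset V) (c : ℝ) (hs : (s.card : ℝ) ≤ c) (ω : Ω) :
    |RR ξ s ω| ≤ c * β := by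
  refine (RR_abs_le s ω).trans ?_
  calc ∑ k ∈ s, |ξ k ω| ≤ ∑ k ∈ s, β := Finset.sum_le_sum fun k _ => H.bdd k ω
    _ = s.card * β := by simp
    _ ≤ _ := mul_le_mul_of_nonneg_right hs H.hβ.le

lemma Core.R2_le (H : Core μ ξ nb β d) (k j : V) (ω : Ω) :
    |RR ξ (nb k ∪ nb j) ω| ≤ 2 * (d * β) := by
  have : ((nb k ∪ nb j).card : ℝ) ≤ 2 * d := by
    have h : ((nb k ∪ nb j).card : ℝ) ≤ (nb k).card + (nb j).card := by
      exact_mod_cast Finset.card_union_le _ _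
    linarith [H.card k, H.card j]
  have := H.R_le _ _ this ω
  linarith

lemma Core.R3_le (H : Core μ ξ nb β d) (k j l : V) (ω : Ω) :
    |RR ξ (nb k ∪ nb j ∪ nb l) ω| ≤ 3 * (d * β) := by
  have : ((nb k ∪ nb j ∪ nb l).card : ℝ) ≤ 3 * d := by
    have h : ((nb k ∪ nb j).card : ℝ) ≤ (nb k).card + (nb j).card := by
      exact_mod_cast Finset.card_union_le _ _
    have h' : ((nb k ∪ nb j ∪ nb l).card : ℝ) ≤ (nb k ∪ nb j).card + (nb l).card := by
      exact_mod_cast Finset.card_union_le _ _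
    linarith [H.card k, H.card j, H.card l]
  have := H.R_le _ _ this ω
  linarith

lemma Core.factor (H : Core μ ξ nb β d) (k j l : V) (U : ℝ × ℝ × ℝ → ℝ) (hU : Measurable U)
    (q : ℝ → ℝ) (hq : Measurable q) :
    ∫ ω, U (ξ k ω, ξ j ω, ξ l ω) * q (WW μ ξ ω - RR ξ (nb k ∪ nb j ∪ nb l) ω) ∂μ =
    (∫ ω, U (ξ k ω, ξ j ω, ξ l ω) ∂μ) *
      ∫ ω, q (WW μ ξ ω - RR ξ (nb k ∪ nb j ∪ nb l) ω) ∂μ := by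
  set s := nb k ∪ nb j ∪ nb l with hs
  set c := ∑ k, ∫ ω', ξ k ω' ∂μ with hc
  have e : ∀ ω, WW μ ξ ω - RR ξ s ω = (∑ m ∈ Finset.univ \ s, ξ m ω) - c := by
    intro ω
    have := Finset.sum_sdiff (Finset.subset_univ s) (f := fun m => ξ m ω)
    simp only [WW, RR, Finset.sum_sub_distrib]
    linarith
  simp_rw [e]
  have hi := (H.indep k j l).comp hU (hq.comp (measurable_id.sub_const c))
  have m1 : Measurable (fun ω => (ξ k ω, ξ j ω, ξ l ω)) :=
    (H.meas k).prodMk ((H.meas j).prodMk (H.meas l))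
  have m2 : Measurable (fun ω => ∑ m ∈ Finset.univ \ s, ξ m ω) :=
    Finset.measurable_sum _ fun i _ => H.meas i
  exact hi.integral_fun_mul_eq_mul_integral (hU.comp m1).aestronglyMeasurable
    ((hq.comp (measurable_id.sub_const c)).comp m2).aestronglyMeasurable

lemma psi_mono (z ε ρ r w w' : ℝ) (hε : 0 < ε) (h : |w - w'| ≤ r) :
    psi z ε ρ w ≤ psi z ε (ρ + r) w' := by
  have h' := abs_le.mp h
  have a : |w| ≤ |w'| + r := by
    calc |w| = |w' + (w - w')| := by ring_nf
      _ ≤ |w'| + |w - w'| := abs_add_le _ _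
      _ ≤ _ := by linarith
  have b : (Set.Ioc (z - ρ) (z + ε + ρ)).indicator (fun _ => (1:ℝ)) w ≤
      (Set.Ioc (z - (ρ+r)) (z + ε + (ρ+r))).indicator (fun _ => (1:ℝ)) w' := by
    by_cases hw : w ∈ Set.Ioc (z - ρ) (z + ε + ρ)
    · rw [Set.indicator_of_mem hw, Set.indicator_of_mem]
      exact ⟨by linarith [hw.1], by linarith [hw.2]⟩
    · rw [Set.indicator_of_notMem hw]
      exact Set.indicator_nonneg (fun _ _ => zero_le_one) _
  have := mul_le_mul_of_nonneg_left b (one_div_nonneg.mpr hε.le)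
  unfold psi
  linarith

lemma psi_meas (z ε ρ : ℝ) : Measurable (psi z ε ρ) := by
  unfold psi
  have : Measurable ((Set.Ioc (z - ρ) (z + ε + ρ)).indicator (fun _ => (1:ℝ))) :=
    measurable_const.indicator measurableSet_Ioc
  fun_prop

lemma psi_nonneg (z ε ρ w : ℝ) (hε : 0 < ε) (hρ : 0 ≤ ρ) : 0 ≤ psi z ε ρ w := by
  unfold psi
  have : 0 ≤ (Set.Ioc (z - ρ) (z + ε + ρ)).indicator (fun _ => (1:ℝ)) w :=
    Set.indicator_nonneg (fun _ _ => zero_le_one) _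
  positivity

lemma psi_bm {f : Ω → ℝ} (hf : BM f) (z ε ρ : ℝ) : BM (fun ω => psi z ε ρ (f ω)) := by
  unfold psi
  refine (((BM.const _).add hf.abs).add (BM.const _)).add ((BM.const _).mul ?_)
  refine hf.comp (measurable_const.indicator measurableSet_Ioc) (C := 1) fun x => ?_
  by_cases hx : x ∈ Set.Ioc (z - ρ) (z + ε + ρ)
  · simp [Set.indicator_of_mem hx]
  · simp [Set.indicator_of_notMem hx]

lemma Core.key (H : Core μ ξ nb β d) (z ε : ℝ) (hε : 0 < ε) (k j l : V) (U : ℝ × ℝ × ℝ → ℝ)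
    (hU : Measurable U) (hU0 : ∀ x, 0 ≤ U x) (hUb : BM fun ω => U (ξ k ω, ξ j ω, ξ l ω)) :
    ∫ ω, U (ξ k ω, ξ j ω, ξ l ω) * psi z ε (2 * (d * β)) (WW μ ξ ω) ∂μ ≤
      (∫ ω, psi z ε (8 * (d * β)) (WW μ ξ ω) ∂μ) * ∫ ω, U (ξ k ω, ξ j ω, ξ l ω) ∂μ := by
  set s := nb k ∪ nb j ∪ nb l with hs
  have hbm : BM (fun ω => WW μ ξ ω - RR ξ s ω) := H.bmW.sub (H.bmR s)
  calc _ ≤ ∫ ω, U (ξ k ω, ξ j ω, ξ l ω) * psi z ε (5 * (d * β)) (WW μ ξ ω - RR ξ s ω) ∂μ := by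
        refine integral_mono ((hUb.mul (psi_bm H.bmW _ _ _)).integrable μ)
          ((hUb.mul (psi_bm hbm _ _ _)).integrable μ) fun ω => ?_
        refine mul_le_mul_of_nonneg_left ?_ (hU0 _)
        have := psi_mono z ε (2 * (d * β)) (3 * (d * β)) (WW μ ξ ω) (WW μ ξ ω - RR ξ s ω) hε
          (by rw [sub_sub_cancel]; exact H.R3_le k j l ω)
        rwa [show 2 * (d * β) + 3 * (d * β) = 5 * (d * β) by ring] at this
    _ = (∫ ω, U (ξ k ω, ξ j ω, ξ l ω) ∂μ) * ∫ ω, psi z ε (5 * (d * β)) (WW μ ξ ω - RR ξ s ω) ∂μ :=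
        H.factor k j l U hU _ (psi_meas _ _ _)
    _ ≤ (∫ ω, U (ξ k ω, ξ j ω, ξ l ω) ∂μ) * ∫ ω, psi z ε (8 * (d * β)) (WW μ ξ ω) ∂μ := by
        refine mul_le_mul_of_nonneg_left ?_ (integral_nonneg fun ω => hU0 _)
        refine integral_mono ((psi_bm hbm _ _ _).integrable μ)
          ((psi_bm H.bmW _ _ _).integrable μ) fun ω => ?_
        have := psi_mono z ε (5 * (d * β)) (3 * (d * β)) (WW μ ξ ω - RR ξ s ω) (WW μ ξ ω) hε
          (by rw [show WW μ ξ ω - RR ξ s ω - WW μ ξ ω = - RR ξ s ω by ring, abs_neg]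
              exact H.R3_le k j l ω)
        rwa [show 5 * (d * β) + 3 * (d * β) = 8 * (d * β) by ring] at this
    _ = _ := mul_comm _ _

/-! moment bounds -/

lemma amgm (x y w : ℝ) (hx : 0 ≤ x) (hy : 0 ≤ y) (hw : 0 ≤ w) :
    x * y * w ≤ (x^3 + y^3 + w^3)/3 := by
  nlinarith [mul_nonneg (add_nonneg (add_nonneg hx hy) hw)
    (add_nonneg (add_nonneg (sq_nonneg (x-y)) (sq_nonneg (y-w))) (sq_nonneg (x-w)))]

/-- third absolute moment -/
def m3 (μ : Measure Ω) (ξ : V → Ω → ℝ) (k : V) : ℝ := ∫ ω, |ξ k ω|^3 ∂μ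

lemma m3_nonneg (k : V) : 0 ≤ m3 μ ξ k := integral_nonneg fun ω => by positivity

lemma Core.bm3 (H : Core μ ξ nb β d) (k : V) : BM (fun ω => |ξ k ω|^3) := by
  have h := (H.bm k).abs
  have := (h.mul h).mul h
  refine (by convert this using 2; ring)

lemma Core.jensen (H : Core μ ξ nb β d) (k : V) : (∫ ω, |ξ k ω| ∂μ)^3 ≤ m3 μ ξ k := by
  set p := ∫ ω, |ξ k ω| ∂μ with hp
  have hp0 : 0 ≤ p := integral_nonneg fun ω => abs_nonneg _
  have h1 : ∫ ω, (3 * p^2 * |ξ k ω| - 2 * p^3) ∂μ ≤ m3 μ ξ k := by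
    refine integral_mono ((((BM.const _).mul (H.bm k).abs).sub (BM.const _)).integrable μ)
      ((H.bm3 k).integrable μ) fun ω => ?_
    have := abs_nonneg (ξ k ω)
    simp only
    nlinarith [mul_nonneg (sq_nonneg (|ξ k ω| - p)) (by positivity : 0 ≤ |ξ k ω| + 2 * p)]
  rw [integral_sub (((BM.const _).mul (H.bm k).abs).integrable μ) (integrable_const _),
    integral_const_mul, ← hp] at h1
  simp at h1
  nlinarith

/-- absolute first moment -/
def m1 (μ : Measure Ω) (ξ : V → Ω → ℝ) (k : V) : ℝ := ∫ ω, |ξ k ω| ∂μ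

lemma m1_nonneg (k : V) : 0 ≤ m1 μ ξ k := integral_nonneg fun ω => abs_nonneg _

lemma Core.mom (H : Core μ ξ nb β d) (k i j : V) :
    ∫ ω, (|ξ k ω| + m1 μ ξ k) * |ξ i ω| * |ξ j ω| ∂μ ≤
      2 * ((m3 μ ξ k + m3 μ ξ i + m3 μ ξ j)/3) := by
  have h1 : ∫ ω, (|ξ k ω| + m1 μ ξ k) * |ξ i ω| * |ξ j ω| ∂μ ≤
      ∫ ω, (|ξ k ω|^3 + (m1 μ ξ k)^3 + (|ξ i ω|^3 + |ξ i ω|^3) + (|ξ j ω|^3 + |ξ j ω|^3)) * (1/3) ∂μ := by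
    refine integral_mono (((((H.bm k).abs.add (BM.const _)).mul (H.bm i).abs).mul (H.bm j).abs).integrable μ)
      ((((((H.bm3 k).add (BM.const _)).add ((H.bm3 i).add (H.bm3 i))).add
        ((H.bm3 j).add (H.bm3 j))).mul (BM.const _)).integrable μ) fun ω => ?_
    have a := amgm |ξ k ω| |ξ i ω| |ξ j ω| (abs_nonneg _) (abs_nonneg _) (abs_nonneg _)
    have b := amgm (m1 μ ξ k) |ξ i ω| |ξ j ω| (m1_nonneg _) (abs_nonneg _) (abs_nonneg _)
    simp only
    linarith
  have I := fun k => H.bm3 k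
  have II := fun k => (H.bm3 k).add (H.bm3 k)
  have Ic : BM (fun _ : Ω => (m1 μ ξ k)^3) := BM.const _
  rw [integral_mul_const, BM.int_add (((I k).add Ic).add (II i)) (II j) μ,
    BM.int_add ((I k).add Ic) (II i) μ, BM.int_add (I k) Ic μ, BM.int_add (I i) (I i) μ,
    BM.int_add (I j) (I j) μ, integral_const] at h1
  simp at h1
  have := H.jensen k
  unfold m1 at *
  unfold m3 at *
  linarith

lemma Core.mom2 (H : Core μ ξ nb β d) (k i j : V) :
    (∫ ω, (|ξ k ω| + m1 μ ξ k) * |ξ i ω| ∂μ) * m1 μ ξ j ≤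
      2 * ((m3 μ ξ k + m3 μ ξ i + m3 μ ξ j)/3) := by
  rw [← integral_mul_const]
  have h1 : ∫ ω, (|ξ k ω| + m1 μ ξ k) * |ξ i ω| * m1 μ ξ j ∂μ ≤
      ∫ ω, (|ξ k ω|^3 + ((m1 μ ξ k)^3 + 2 * (m1 μ ξ j)^3) + (|ξ i ω|^3 + |ξ i ω|^3)) * (1/3) ∂μ := by
    refine integral_mono (((((H.bm k).abs.add (BM.const _)).mul (H.bm i).abs).mul (BM.const _)).integrable μ)
      (((((H.bm3 k).add (BM.const _)).add ((H.bm3 i).add (H.bm3 i))).mul (BM.const _)).integrable μ) fun ω => ?_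
    have a := amgm |ξ k ω| |ξ i ω| (m1 μ ξ j) (abs_nonneg _) (abs_nonneg _) (m1_nonneg _)
    have b := amgm (m1 μ ξ k) |ξ i ω| (m1 μ ξ j) (m1_nonneg _) (abs_nonneg _) (m1_nonneg _)
    simp only
    linarith
  have I := fun k => H.bm3 k
  have II := fun k => (H.bm3 k).add (H.bm3 k)
  have Ic : BM (fun _ : Ω => (m1 μ ξ k)^3 + 2 * (m1 μ ξ j)^3) := BM.const _
  refine h1.trans ?_
  rw [integral_mul_const, BM.int_add ((I k).add Ic) (II i) μ, BM.int_add (I k) Ic μ,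
    BM.int_add (I i) (I i) μ, integral_const]
  simp
  have := H.jensen k
  have := H.jensen j
  unfold m1 at *
  unfold m3 at *
  linarith

/-! combinatorial sums -/

lemma Core.sum_nb (H : Core μ ξ nb β d) (x : V → ℝ) (hx : ∀ k, 0 ≤ x k) :
    ∑ k, ∑ j ∈ nb k, x j ≤ d * ∑ k, x k := by
  have e : ∑ k, ∑ j ∈ nb k, x j = ∑ j, ∑ k ∈ nb j, x j := by
    apply Finset.sum_comm'
    intro a b; simp [H.symm a b]
  rw [e, Finset.mul_sum]
  refine Finset.sum_le_sum fun j _ => ?_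
  simp only [Finset.sum_const, nsmul_eq_mul]
  exact mul_le_mul_of_nonneg_right (H.card j) (hx j)

lemma Core.sum_const_nb (H : Core μ ξ nb β d) (k : V) (c : ℝ) (hc : 0 ≤ c) :
    ∑ j ∈ nb k, c ≤ d * c := by
  simp only [Finset.sum_const, nsmul_eq_mul]
  exact mul_le_mul_of_nonneg_right (H.card k) hc

/-- `∑ k, ∑ i ∈ nb k, ∑ j ∈ nb k` of the triple average -/
lemma Core.trip1 (H : Core μ ξ nb β d) (x : V → ℝ) (hx : ∀ k, 0 ≤ x k) :
    ∑ k, ∑ i ∈ nb k, ∑ j ∈ nb k, (x k + x i + x j)/3 ≤ d^2 * ∑ k, x k := by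
  have hd := H.hd
  set S := ∑ k, x k with hS
  have h1 : ∀ k, ∑ i ∈ nb k, ∑ j ∈ nb k, (x k + x i + x j)/3 ≤
      (d^2 * x k + 2 * d * ∑ i ∈ nb k, x i)/3 := by
    intro k
    set s := ∑ i ∈ nb k, x i with hs
    have hs0 : 0 ≤ s := Finset.sum_nonneg fun i _ => hx i
    have hcard : (0:ℝ) ≤ (nb k).card := Nat.cast_nonneg _
    have : ∑ i ∈ nb k, ∑ j ∈ nb k, (x k + x i + x j)/3 =
        ((nb k).card^2 * x k + 2 * (nb k).card * s)/3 := by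
      simp_rw [← Finset.sum_div, Finset.sum_add_distrib, Finset.sum_const, nsmul_eq_mul,
        ← Finset.mul_sum, ← hs]
      ring
    rw [this]
    have a := H.card k
    have := hx k
    gcongr
  refine (Finset.sum_le_sum fun k _ => h1 k).trans ?_
  rw [← Finset.sum_div, Finset.sum_add_distrib, ← Finset.mul_sum, ← Finset.mul_sum, ← hS]
  have := mul_le_mul_of_nonneg_left (H.sum_nb x hx) hd.le
  nlinarith

lemma Core.trip2 (H : Core μ ξ nb β d) (x : V → ℝ) (hx : ∀ k, 0 ≤ x k) :
    ∑ k, ∑ j ∈ nb k, ∑ l ∈ nb k ∪ nb j, (x k + x j + x l)/3 ≤ 2 * (d^2 * ∑ k, x k) := by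
  have hd := H.hd
  have h0 : ∀ k j, ∑ l ∈ nb k ∪ nb j, (x k + x j + x l)/3 ≤
      ∑ l ∈ nb k, (x k + x j + x l)/3 + ∑ l ∈ nb j, (x k + x j + x l)/3 := by
    intro k j
    have := Finset.sum_union_inter (s₁ := nb k) (s₂ := nb j) (f := fun l => (x k + x j + x l)/3)
    have h2 : 0 ≤ ∑ l ∈ nb k ∩ nb j, (x k + x j + x l)/3 :=
      Finset.sum_nonneg fun l _ => by have := hx k; have := hx j; have := hx l; positivity
    linarith
  have h1 : ∑ k, ∑ j ∈ nb k, ∑ l ∈ nb j, (x k + x j + x l)/3 ≤ d^2 * ∑ k, x k := by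
    have e : ∑ k, ∑ j ∈ nb k, ∑ l ∈ nb j, (x k + x j + x l)/3 =
        ∑ j, ∑ k ∈ nb j, ∑ l ∈ nb j, (x j + x k + x l)/3 := by
      rw [Finset.sum_comm' (s' := fun j => nb j) (t' := Finset.univ)]
      · refine Finset.sum_congr rfl fun j _ => Finset.sum_congr rfl fun k _ =>
          Finset.sum_congr rfl fun l _ => by ring
      · intro a b; simp [H.symm a b]
    rw [e]; exact H.trip1 x hx
  calc _ ≤ ∑ k, ∑ j ∈ nb k, (∑ l ∈ nb k, (x k + x j + x l)/3 + ∑ l ∈ nb j, (x k + x j + x l)/3) :=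
        Finset.sum_le_sum fun k _ => Finset.sum_le_sum fun j _ => h0 k j
    _ = ∑ k, ∑ j ∈ nb k, ∑ l ∈ nb k, (x k + x j + x l)/3 +
        ∑ k, ∑ j ∈ nb k, ∑ l ∈ nb j, (x k + x j + x l)/3 := by
        simp_rw [Finset.sum_add_distrib]
    _ ≤ _ := by linarith [H.trip1 x hx]

/-! the Stein expansion -/

lemma taylor1 (f f' : ℝ → ℝ) (hd : ∀ w, HasDerivAt f (f' w) w) (w T P : ℝ)
    (hl : ∀ x, |x - w| ≤ |T| → |f' x - f' w| ≤ |x - w| * P) :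
    |f w - f (w - T) - T * f' w| ≤ T^2 * |P| := by
  have := (convex_Icc (w - |T|) (w + |T|)).norm_image_sub_le_of_norm_hasDerivWithin_le
      (f := fun x => f x - x * f' w) (f' := fun x => f' x - 1 * f' w) (C := |T| * |P|)
      (x := w - T) (y := w)
      (fun u _ => ((hd u).sub ((hasDerivAt_id u).mul_const (f' w))).hasDerivWithinAt) ?_ ?_ ?_
  · rw [Real.norm_eq_abs, Real.norm_eq_abs, sub_sub_cancel] at this
    calc _ = |f w - w * f' w - (f (w - T) - (w - T) * f' w)| := by ring_nf
      _ ≤ _ := this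
      _ = |T|^2 * |P| := by ring
      _ = _ := by rw [sq_abs]
  · intro u hu
    have hu' : |u - w| ≤ |T| := abs_le.mpr ⟨by linarith [hu.1], by linarith [hu.2]⟩
    rw [Real.norm_eq_abs, one_mul]
    refine (hl u hu').trans ?_
    calc |u - w| * P ≤ |u - w| * |P| := mul_le_mul_of_nonneg_left (le_abs_self P) (abs_nonneg _)
        _ ≤ _ := mul_le_mul_of_nonneg_right hu' (abs_nonneg _)
  · constructor <;> linarith [neg_abs_le T, le_abs_self T]
  · constructor <;> linarith [abs_nonneg T]

lemma Core.expand (H : Core μ ξ nb β d) (f f' : ℝ → ℝ) (hd : ∀ w, HasDerivAt f (f' w) w)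
    (hf'm : Measurable f') (hfb : ∀ w, |f w| ≤ 1.26) (hf'b : ∀ w, |f' w| ≤ 1)
    (Ψ : ℝ → ℝ) (hΨ0 : ∀ w, 0 ≤ Ψ w) (hΨ : BM fun ω => Ψ (WW μ ξ ω))
    (hlip : ∀ w x y, |x - w| ≤ 2 * (d * β) → |y - w| ≤ 2 * (d * β) →
      |f' x - f' y| ≤ |x - y| * Ψ w)
    (K : ℝ) (hK0 : 0 ≤ K)
    (hK : ∀ k j l, ∀ U : ℝ × ℝ × ℝ → ℝ, Measurable U → (∀ x, 0 ≤ U x) →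
      (BM fun ω => U (ξ k ω, ξ j ω, ξ l ω)) →
      ∫ ω, U (ξ k ω, ξ j ω, ξ l ω) * Ψ (WW μ ξ ω) ∂μ ≤ K * ∫ ω, U (ξ k ω, ξ j ω, ξ l ω) ∂μ) :
    |∫ ω, f' (WW μ ξ ω) ∂μ - ∫ ω, WW μ ξ ω * f (WW μ ξ ω) ∂μ| ≤
      10 * K * (d^2 * ∑ k, m3 μ ξ k) := by
  have hfm : Measurable f := (continuous_iff_continuousAt.mpr fun w => (hd w).continuousAt).measurable
  set W := WW μ ξ with hW
  set p : V → ℝ := fun k => ∫ ω, ξ k ω ∂μ with hp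
  set η : V → Ω → ℝ := fun k ω => ξ k ω - p k with hη
  set t : V → V → V → ℝ := fun k i j => (m3 μ ξ k + m3 μ ξ i + m3 μ ξ j)/3 with ht
  set c : V → V → ℝ := fun k j => ∫ ω, η k ω * ξ j ω ∂μ with hc
  have hbd : 0 < d * β := mul_pos H.hd H.hβ
  have bη : ∀ k, BM (η k) := fun k => (H.bm k).sub (BM.const _)
  have bfW : BM fun ω => f (W ω) := H.bmW.comp hfm hfb
  have bf'W : BM fun ω => f' (W ω) := H.bmW.comp hf'm hf'b
  have hpm : ∀ k, |p k| ≤ m1 μ ξ k := fun k => abs_integral_le_integral_abs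
  have hηle : ∀ k ω, |η k ω| ≤ |ξ k ω| + m1 μ ξ k := fun k ω =>
    (abs_sub _ _).trans (by linarith [hpm k])
  have hη0 : ∀ k, ∫ ω, η k ω ∂μ = 0 := by
    intro k
    simp only [hη]
    rw [BM.int_sub (H.bm k) (BM.const _) μ]; simp [hp]
  have bA : ∀ k i j, BM fun ω => (|ξ k ω| + m1 μ ξ k) * |ξ i ω| * |ξ j ω| := fun k i j =>
    (((H.bm k).abs.add (BM.const _)).mul (H.bm i).abs).mul (H.bm j).abs
  -- weighted triple moments
  have hA : ∀ k i j, ∫ ω, (|ξ k ω| + m1 μ ξ k) * |ξ i ω| * |ξ j ω| * Ψ (W ω) ∂μ ≤ 2 * K * t k i j := by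
    intro k i j
    have h1 := hK k i j (fun x => (|x.1| + m1 μ ξ k) * |x.2.1| * |x.2.2|) (by fun_prop)
      (fun x => by have := m1_nonneg (μ := μ) (ξ := ξ) k; positivity) (bA k i j)
    refine h1.trans ?_
    have := mul_le_mul_of_nonneg_left (H.mom k i j) hK0
    simp only [ht]
    linarith
  have hB : ∀ k j l, ∫ ω, ((|ξ k ω| + m1 μ ξ k) * |ξ j ω| +
      ∫ ω', (|ξ k ω'| + m1 μ ξ k) * |ξ j ω'| ∂μ) * |ξ l ω| * Ψ (W ω) ∂μ ≤ 4 * K * t k j l := by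
    intro k j l
    set cc := ∫ ω', (|ξ k ω'| + m1 μ ξ k) * |ξ j ω'| ∂μ with hcc
    have hm := m1_nonneg (μ := μ) (ξ := ξ) k
    have hcc0 : 0 ≤ cc := integral_nonneg fun ω => by positivity
    have h1 := hK k j l (fun x => ((|x.1| + m1 μ ξ k) * |x.2.1| + cc) * |x.2.2|) (by fun_prop)
      (fun x => by positivity)
      (((((H.bm k).abs.add (BM.const _)).mul (H.bm j).abs).add (BM.const _)).mul (H.bm l).abs)
    refine h1.trans ?_
    have e : ∫ ω, ((|ξ k ω| + m1 μ ξ k) * |ξ j ω| + cc) * |ξ l ω| ∂μ =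
        ∫ ω, (|ξ k ω| + m1 μ ξ k) * |ξ j ω| * |ξ l ω| ∂μ + cc * m1 μ ξ l := by
      have hl : cc * m1 μ ξ l = ∫ ω, cc * |ξ l ω| ∂μ := (integral_const_mul _ _).symm
      rw [hl, ← BM.int_add (bA k j l) ((BM.const _).mul (H.bm l).abs) μ]
      congr 1; funext ω; ring
    simp only
    rw [e]
    have := mul_le_mul_of_nonneg_left (add_le_add (H.mom k j l) (H.mom2 k j l)) hK0
    simp only [ht]
    linarith
  -- step 1
  have h1 : ∫ ω, W ω * f (W ω) ∂μ = ∑ k, ∫ ω, η k ω * f (W ω) ∂μ := by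
    rw [← BM.int_sum Finset.univ (fun k => (bη k).mul bfW) μ]
    congr 1; funext ω
    rw [← Finset.sum_mul]
    rfl
  -- vanishing
  have hz : ∀ k, ∀ q : ℝ → ℝ, Measurable q → ∫ ω, η k ω * q (W ω - RR ξ (nb k) ω) ∂μ = 0 := by
    intro k q hq
    have := H.factor k k k (fun x => x.1 - p k) (by fun_prop) q hq
    simp only [Finset.union_self] at this
    rw [hη] at *
    simp only at *
    rw [this, hη0 k, zero_mul]
  -- step 2
  have h2 : ∀ k, |∫ ω, η k ω * f (W ω) ∂μ - ∑ j ∈ nb k, ∫ ω, η k ω * ξ j ω * f' (W ω) ∂μ| ≤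
      ∑ i ∈ nb k, ∑ j ∈ nb k, 2 * K * t k i j := by
    intro k
    set T := RR ξ (nb k) with hT
    have bT : BM T := H.bmR _
    have bfT : BM fun ω => f (W ω - T ω) := (H.bmW.sub bT).comp hfm hfb
    have e1 : ∑ j ∈ nb k, ∫ ω, η k ω * ξ j ω * f' (W ω) ∂μ = ∫ ω, η k ω * (T ω * f' (W ω)) ∂μ := by
      rw [← BM.int_sum (nb k) (fun j => ((bη k).mul (H.bm j)).mul bf'W) μ]
      congr 1; funext ω
      simp only [hT, RR, Finset.sum_mul, Finset.mul_sum, mul_assoc]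
    have e2 : ∫ ω, η k ω * f (W ω) ∂μ - ∫ ω, η k ω * (T ω * f' (W ω)) ∂μ =
        ∫ ω, η k ω * (f (W ω) - f (W ω - T ω) - T ω * f' (W ω)) ∂μ := by
      have e3 : (fun ω => η k ω * (f (W ω) - f (W ω - T ω) - T ω * f' (W ω))) =
          fun ω => η k ω * f (W ω) - η k ω * f (W ω - T ω) - η k ω * (T ω * f' (W ω)) := by
        funext ω; ring
      rw [e3, BM.int_sub (((bη k).mul bfW).sub ((bη k).mul bfT)) ((bη k).mul (bT.mul bf'W)) μ,
        BM.int_sub ((bη k).mul bfW) ((bη k).mul bfT) μ, hz k f hfm, sub_zero]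
    rw [e1, e2]
    refine abs_integral_le_integral_abs.trans ?_
    have bS : BM fun ω => ∑ i ∈ nb k, ∑ j ∈ nb k,
        (|ξ k ω| + m1 μ ξ k) * |ξ i ω| * |ξ j ω| * Ψ (W ω) :=
      BM.sum _ fun i => BM.sum _ fun j => (bA k i j).mul hΨ
    calc _ ≤ ∫ ω, ∑ i ∈ nb k, ∑ j ∈ nb k,
          (|ξ k ω| + m1 μ ξ k) * |ξ i ω| * |ξ j ω| * Ψ (W ω) ∂μ := by
          refine integral_mono (((bη k).mul ((bfW.sub bfT).sub (bT.mul bf'W))).abs.integrable μ)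
            (bS.integrable μ) fun ω => ?_
          have hTb : |T ω| ≤ d * β := H.R_le _ _ (H.card k) ω
          have hT2 : T ω ^2 ≤ (∑ i ∈ nb k, |ξ i ω|)^2 := by
            rw [← sq_abs]
            exact pow_le_pow_left₀ (abs_nonneg _) (RR_abs_le _ _) 2
          have a := taylor1 f f' hd (W ω) (T ω) (Ψ (W ω)) fun x hx =>
            hlip _ _ _ (by linarith) (by simp; linarith)
          rw [abs_of_nonneg (hΨ0 _)] at a
          have hr : 0 ≤ |ξ k ω| + m1 μ ξ k := add_nonneg (abs_nonneg _) (m1_nonneg _)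
          calc |η k ω * (f (W ω) - f (W ω - T ω) - T ω * f' (W ω))|
              ≤ (|ξ k ω| + m1 μ ξ k) * ((∑ i ∈ nb k, |ξ i ω|)^2 * Ψ (W ω)) := by
                rw [abs_mul]
                refine mul_le_mul (hηle k ω) (a.trans ?_) (abs_nonneg _) hr
                exact mul_le_mul_of_nonneg_right hT2 (hΨ0 _)
            _ = _ := by
                rw [sq, Finset.sum_mul_sum, Finset.sum_mul, Finset.mul_sum]
                refine Finset.sum_congr rfl fun i _ => ?_
                rw [Finset.sum_mul, Finset.mul_sum]
                refine Finset.sum_congr rfl fun j _ => ?_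
                ring
      _ = ∑ i ∈ nb k, ∑ j ∈ nb k, ∫ ω, (|ξ k ω| + m1 μ ξ k) * |ξ i ω| * |ξ j ω| * Ψ (W ω) ∂μ := by
          rw [BM.int_sum _ (fun i => BM.sum _ fun j => (bA k i j).mul hΨ) μ]
          refine Finset.sum_congr rfl fun i _ => ?_
          rw [BM.int_sum _ (fun j => (bA k i j).mul hΨ) μ]
      _ ≤ _ := Finset.sum_le_sum fun i _ => Finset.sum_le_sum fun j _ => hA k i j
  -- step 3
  have h3 : ∀ k j, |∫ ω, η k ω * ξ j ω * f' (W ω) ∂μ - c k j * ∫ ω, f' (W ω) ∂μ| ≤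
      ∑ l ∈ nb k ∪ nb j, 4 * K * t k j l := by
    intro k j
    set T := RR ξ (nb k ∪ nb j) with hT
    have bT : BM T := H.bmR _
    have bfT : BM fun ω => f' (W ω - T ω) := (H.bmW.sub bT).comp hf'm hf'b
    have bg : BM fun ω => η k ω * ξ j ω := (bη k).mul (H.bm j)
    have bgc : BM fun ω => η k ω * ξ j ω - c k j := bg.sub (BM.const _)
    have hg0 : ∫ ω, (η k ω * ξ j ω - c k j) ∂μ = 0 := by
      rw [BM.int_sub bg (BM.const _) μ]; simp [hc]
    have hzz : ∫ ω, (η k ω * ξ j ω - c k j) * f' (W ω - T ω) ∂μ = 0 := by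
      have := H.factor k j j (fun x => (x.1 - p k) * x.2.1 - c k j) (by fun_prop) f' hf'm
      simp only [Finset.union_assoc, Finset.union_self] at this
      refine Eq.trans this ?_
      rw [show (∫ ω, ((ξ k ω - p k) * ξ j ω - c k j) ∂μ) = 0 from hg0, zero_mul]
    have e2 : ∫ ω, η k ω * ξ j ω * f' (W ω) ∂μ - c k j * ∫ ω, f' (W ω) ∂μ =
        ∫ ω, (η k ω * ξ j ω - c k j) * (f' (W ω) - f' (W ω - T ω)) ∂μ := by
      have e3 : (fun ω => (η k ω * ξ j ω - c k j) * (f' (W ω) - f' (W ω - T ω))) =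
          fun ω => η k ω * ξ j ω * f' (W ω) - c k j * f' (W ω) -
            (η k ω * ξ j ω - c k j) * f' (W ω - T ω) := by
        funext ω; ring
      rw [e3, BM.int_sub ((bg.mul bf'W).sub ((BM.const _).mul bf'W)) (bgc.mul bfT) μ,
        BM.int_sub (bg.mul bf'W) ((BM.const _).mul bf'W) μ, hzz, sub_zero, integral_const_mul]
    rw [e2]
    set cc := ∫ ω', (|ξ k ω'| + m1 μ ξ k) * |ξ j ω'| ∂μ with hcc
    have bab : BM fun ω => (|ξ k ω| + m1 μ ξ k) * |ξ j ω| :=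
      ((H.bm k).abs.add (BM.const _)).mul (H.bm j).abs
    have hle : ∀ ω, |η k ω * ξ j ω| ≤ (|ξ k ω| + m1 μ ξ k) * |ξ j ω| := fun ω => by
      rw [abs_mul]; exact mul_le_mul_of_nonneg_right (hηle k ω) (abs_nonneg _)
    have hcle : |c k j| ≤ cc := by
      refine abs_integral_le_integral_abs.trans ?_
      exact integral_mono (bg.abs.integrable μ) (bab.integrable μ) hle
    have bF : ∀ l, BM fun ω => ((|ξ k ω| + m1 μ ξ k) * |ξ j ω| + cc) * |ξ l ω| * Ψ (W ω) :=
      fun l => ((bab.add (BM.const _)).mul (H.bm l).abs).mul hΨ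
    refine abs_integral_le_integral_abs.trans ?_
    calc _ ≤ ∫ ω, ∑ l ∈ nb k ∪ nb j,
          ((|ξ k ω| + m1 μ ξ k) * |ξ j ω| + cc) * |ξ l ω| * Ψ (W ω) ∂μ := by
          refine integral_mono ((bgc.mul (bf'W.sub bfT)).abs.integrable μ)
            ((BM.sum _ bF).integrable μ) fun ω => ?_
          have hTb : |T ω| ≤ 2 * (d * β) := H.R2_le k j ω
          have a := hlip (W ω) (W ω) (W ω - T ω) (by simp; linarith)
            (by rw [show W ω - T ω - W ω = -T ω by ring, abs_neg]; exact hTb)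
          rw [sub_sub_cancel] at a
          have b : |T ω| * Ψ (W ω) ≤ (∑ l ∈ nb k ∪ nb j, |ξ l ω|) * Ψ (W ω) :=
            mul_le_mul_of_nonneg_right (RR_abs_le _ _) (hΨ0 _)
          have b2 : |η k ω * ξ j ω - c k j| ≤ (|ξ k ω| + m1 μ ξ k) * |ξ j ω| + cc :=
            (abs_sub _ _).trans (add_le_add (hle ω) hcle)
          calc |(η k ω * ξ j ω - c k j) * (f' (W ω) - f' (W ω - T ω))|
              ≤ ((|ξ k ω| + m1 μ ξ k) * |ξ j ω| + cc) * ((∑ l ∈ nb k ∪ nb j, |ξ l ω|) * Ψ (W ω)) := by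
                rw [abs_mul]
                exact mul_le_mul b2 (a.trans b) (abs_nonneg _) ((abs_nonneg _).trans b2)
            _ = _ := by
                rw [Finset.sum_mul, Finset.mul_sum]
                refine Finset.sum_congr rfl fun j _ => ?_
                ring
      _ = ∑ l ∈ nb k ∪ nb j, ∫ ω, ((|ξ k ω| + m1 μ ξ k) * |ξ j ω| + cc) * |ξ l ω| * Ψ (W ω) ∂μ :=
          BM.int_sum _ bF μ
      _ ≤ _ := Finset.sum_le_sum fun l _ => hB k j l
  -- variance identity
  have h4 : ∑ k, ∑ j ∈ nb k, c k j = 1 := by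
    rw [← H.var]
    have : ∫ ω, W ω * W ω ∂μ = ∑ k, ∫ ω, η k ω * W ω ∂μ := by
      rw [← BM.int_sum Finset.univ (fun k => (bη k).mul H.bmW) μ]
      congr 1; funext ω
      rw [← Finset.sum_mul]
      rfl
    rw [← hW, this]
    refine Finset.sum_congr rfl fun k _ => ?_
    have bT : BM (RR ξ (nb k)) := H.bmR _
    have e1 : ∫ ω, η k ω * W ω ∂μ = ∫ ω, η k ω * RR ξ (nb k) ω ∂μ := by
      have := hz k id measurable_id
      simp only [id] at this
      have e3 : (fun ω => η k ω * (W ω - RR ξ (nb k) ω)) =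
          fun ω => η k ω * W ω - η k ω * RR ξ (nb k) ω := by funext ω; ring
      rw [e3, BM.int_sub ((bη k).mul H.bmW) ((bη k).mul bT) μ] at this
      linarith
    rw [e1]
    simp only [hc]
    rw [← BM.int_sum (nb k) (fun j => (bη k).mul (H.bm j)) μ]
    congr 1; funext ω
    simp only [RR, Finset.mul_sum]
  -- conclusion
  set J := ∫ ω, f' (W ω) ∂μ with hJ
  set a : V → ℝ := fun k => ∫ ω, η k ω * f (W ω) ∂μ with ha
  set b : V → V → ℝ := fun k j => ∫ ω, η k ω * ξ j ω * f' (W ω) ∂μ with hb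
  have hx : ∀ k, 0 ≤ m3 μ ξ k := fun k => m3_nonneg k
  have e : J - ∫ ω, W ω * f (W ω) ∂μ =
      -(∑ k, ((a k - ∑ j ∈ nb k, b k j) + ∑ j ∈ nb k, (b k j - c k j * J))) := by
    rw [h1]
    have : J = ∑ k, ∑ j ∈ nb k, c k j * J := by
      simp_rw [← Finset.sum_mul]; rw [h4, one_mul]
    simp only [Finset.sum_sub_distrib, Finset.sum_add_distrib]
    linarith
  rw [e, abs_neg]
  calc _ ≤ ∑ k, (∑ i ∈ nb k, ∑ j ∈ nb k, 2 * K * t k i j +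
        ∑ j ∈ nb k, ∑ l ∈ nb k ∪ nb j, 4 * K * t k j l) := by
        refine (Finset.abs_sum_le_sum_abs _ _).trans (Finset.sum_le_sum fun k _ => ?_)
        refine (abs_add_le _ _).trans (add_le_add (h2 k) ?_)
        exact (Finset.abs_sum_le_sum_abs _ _).trans (Finset.sum_le_sum fun j _ => h3 k j)
    _ = 2 * K * (∑ k, ∑ i ∈ nb k, ∑ j ∈ nb k, t k i j) +
        4 * K * (∑ k, ∑ j ∈ nb k, ∑ l ∈ nb k ∪ nb j, t k j l) := by
        simp only [Finset.sum_add_distrib, Finset.mul_sum]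
    _ ≤ 2 * K * (d^2 * ∑ k, m3 μ ξ k) + 4 * K * (2 * (d^2 * ∑ k, m3 μ ξ k)) := by
        have q1 := H.trip1 _ hx
        have q2 := H.trip2 _ hx
        exact add_le_add (mul_le_mul_of_nonneg_left q1 (by positivity))
          (mul_le_mul_of_nonneg_left q2 (by positivity))
    _ = _ := by ring

/-! the bootstrapping argument -/

lemma ind_bm {f : Ω → ℝ} (hf : BM f) {s : Set ℝ} (hs : MeasurableSet s) :
    BM (fun ω => s.indicator (fun _ => (1:ℝ)) (f ω)) := by
  refine hf.comp (measurable_const.indicator hs) (C := 1) fun x => ?_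
  by_cases hx : x ∈ s
  · simp [Set.indicator_of_mem hx]
  · simp [Set.indicator_of_notMem hx]

lemma cdf_ind {f : Ω → ℝ} (hf : BM f) (t : ℝ) :
    (μ {ω | f ω ≤ t}).toReal = ∫ ω, (Set.Iic t).indicator (fun _ => (1:ℝ)) (f ω) ∂μ := by
  have e : (fun ω => (Set.Iic t).indicator (fun _ => (1:ℝ)) (f ω)) =
      ({ω | f ω ≤ t}).indicator (fun _ => (1:ℝ)) := by
    funext ω
    simp [Set.indicator_apply]
  rw [e, integral_indicator (measurableSet_le hf.1 measurable_const)]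
  simp [Measure.real]

lemma ind_Ioc (α γ : ℝ) (h : α ≤ γ) (x : ℝ) :
    (Set.Ioc α γ).indicator (fun _ => (1:ℝ)) x =
      (Set.Iic γ).indicator (fun _ => (1:ℝ)) x - (Set.Iic α).indicator (fun _ => (1:ℝ)) x := by
  simp only [Set.indicator_apply, Set.mem_Ioc, Set.mem_Iic]
  by_cases h1 : x ≤ α
  · have h2 : x ≤ γ := h1.trans h
    simp [h1, h2]
  · by_cases h2 : x ≤ γ
    · simp [h1, h2, not_le.mp h1]
    · simp [h1, h2]

lemma Core.psi_int (H : Core μ ξ nb β d) (z ε : ℝ) (hε : 0 < ε) (δ : ℝ)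
    (hδ : ∀ t, |(μ {ω | WW μ ξ ω ≤ t}).toReal - gcdf t| ≤ δ) :
    ∫ ω, psi z ε (8 * (d * β)) (WW μ ξ ω) ∂μ ≤
      2.26 + 8 * (d * β) + (1/ε) * (2 * δ + 0.4 * (ε + 16 * (d * β))) := by
  have hbd : 0 < d * β := mul_pos H.hd H.hβ
  set b := d * β
  set W := WW μ ξ with hW
  have hbW : BM W := H.bmW
  have h1 : ∫ ω, |W ω| ∂μ ≤ 1 := by
    calc _ ≤ ∫ ω, (1/2 + 1/2 * (W ω * W ω)) ∂μ := by
          refine integral_mono (hbW.abs.integrable μ)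
            (((BM.const _).add ((BM.const _).mul (hbW.mul hbW))).integrable μ) fun ω => ?_
          have := abs_mul_abs_self (W ω)
          simp only
          nlinarith [sq_nonneg (|W ω| - 1)]
      _ = 1 := by
          rw [BM.int_add (BM.const _) ((BM.const _).mul (hbW.mul hbW)) μ, integral_const_mul,
            H.var]
          simp; norm_num
  have h2 : ∫ ω, (Set.Ioc (z - 8 * b) (z + ε + 8 * b)).indicator (fun _ => (1:ℝ)) (W ω) ∂μ ≤
      2 * δ + 0.4 * (ε + 16 * b) := by
    have hle : z - 8 * b ≤ z + ε + 8 * b := by linarith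
    simp_rw [ind_Ioc _ _ hle]
    rw [BM.int_sub (ind_bm hbW measurableSet_Iic) (ind_bm hbW measurableSet_Iic) μ,
      ← cdf_ind hbW, ← cdf_ind hbW]
    have a1 := abs_le.mp (hδ (z - 8 * b))
    have a2 := abs_le.mp (hδ (z + ε + 8 * b))
    have a3 := gcdf_sub _ _ hle
    linarith [a1.1, a2.2]
  have hI : BM fun ω => (Set.Ioc (z - 8 * b) (z + ε + 8 * b)).indicator (fun _ => (1:ℝ)) (W ω) :=
    ind_bm hbW measurableSet_Ioc
  unfold psi
  rw [BM.int_add (((BM.const _).add hbW.abs).add (BM.const _)) ((BM.const _).mul hI) μ,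
    BM.int_add ((BM.const _).add hbW.abs) (BM.const _) μ, BM.int_add (BM.const _) hbW.abs μ]
  have h4 : ∫ ω, 1/ε * (Set.Ioc (z - 8 * b) (z + ε + 8 * b)).indicator (fun _ => (1:ℝ)) (W ω) ∂μ =
      1/ε * ∫ ω, (Set.Ioc (z - 8 * b) (z + ε + 8 * b)).indicator (fun _ => (1:ℝ)) (W ω) ∂μ :=
    integral_const_mul _ _
  have h3 := mul_le_mul_of_nonneg_left h2 (one_div_pos.mpr hε).le
  simp only [integral_const, probReal_univ, smul_eq_mul, one_mul]
  linarith

lemma Core.smooth (H : Core μ ξ nb β d) (z ε : ℝ) (hε : 0 < ε) (δ : ℝ)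
    (hδ : ∀ t, |(μ {ω | WW μ ξ ω ≤ t}).toReal - gcdf t| ≤ δ) :
    |∫ ω, ramp z ε (WW μ ξ ω) ∂μ - ∫ x, ramp z ε x ∂(gaussianReal 0 1)| ≤
      10 * (2.26 + 8 * (d * β) + (1/ε) * (2 * δ + 0.4 * (ε + 16 * (d * β)))) *
        (d^2 * ∑ k, m3 μ ξ k) := by
  have hbd : 0 < d * β := mul_pos H.hd H.hβ
  obtain ⟨f, f', h1, h2, h3, h4⟩ := stein_solution (ramp z ε) (ramp_cont z ε) (ramp_nonneg z ε)
    (ramp_le_one z ε)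
  set m := ∫ x, ramp z ε x ∂(gaussianReal 0 1) with hm
  have hfc : Continuous f := continuous_iff_continuousAt.mpr fun w => (h1 w).continuousAt
  have hf'c : Continuous f' := by
    have : f' = fun w => w * f w + ramp z ε w - m := funext h2
    rw [this]
    have := ramp_cont z ε
    fun_prop
  have hK0 : 0 ≤ ∫ ω, psi z ε (8 * (d * β)) (WW μ ξ ω) ∂μ :=
    integral_nonneg fun ω => psi_nonneg _ _ _ _ hε (by positivity)
  have h := H.expand f f' h1 hf'c.measurable h3 h4 (psi z ε (2 * (d * β)))
    (fun w => psi_nonneg _ _ _ _ hε (by positivity)) (psi_bm H.bmW _ _ _)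
    (fun w x y hx hy => stein_lip z ε hε f f' m h1 h2 h3 h4 _ w x y hx hy)
    (∫ ω, psi z ε (8 * (d * β)) (WW μ ξ ω) ∂μ) hK0
    (fun k j l U hU hU0 hUb => H.key z ε hε k j l U hU hU0 hUb)
  have hbr : BM fun ω => ramp z ε (WW μ ξ ω) := H.bmW.comp (ramp_cont z ε).measurable (C := 1)
    fun x => by rw [abs_of_nonneg (ramp_nonneg _ _ _)]; exact ramp_le_one _ _ _
  have hbf : BM fun ω => f (WW μ ξ ω) := H.bmW.comp hfc.measurable h3
  have e : ∫ ω, f' (WW μ ξ ω) ∂μ = ∫ ω, WW μ ξ ω * f (WW μ ξ ω) ∂μ +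
      ∫ ω, ramp z ε (WW μ ξ ω) ∂μ - m := by
    simp_rw [h2]
    rw [BM.int_sub ((H.bmW.mul hbf).add hbr) (BM.const _) μ, BM.int_add (H.bmW.mul hbf) hbr μ]
    simp
  have e2 : ∫ ω, ramp z ε (WW μ ξ ω) ∂μ - m =
      ∫ ω, f' (WW μ ξ ω) ∂μ - ∫ ω, WW μ ξ ω * f (WW μ ξ ω) ∂μ := by rw [e]; ring
  rw [e2]
  refine h.trans ?_
  have hm3 : 0 ≤ d^2 * ∑ k, m3 μ ξ k :=
    mul_nonneg (sq_nonneg _) (Finset.sum_nonneg fun k _ => m3_nonneg k)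
  refine mul_le_mul_of_nonneg_right ?_ hm3
  linarith [H.psi_int z ε hε δ hδ]

lemma Core.step (H : Core μ ξ nb β d) (ε : ℝ) (hε : 0 < ε) (δ : ℝ)
    (hδ : ∀ t, |(μ {ω | WW μ ξ ω ≤ t}).toReal - gcdf t| ≤ δ) (t : ℝ) :
    |(μ {ω | WW μ ξ ω ≤ t}).toReal - gcdf t| ≤ 0.2 * ε +
      10 * (2.26 + 8 * (d * β) + (1/ε) * (2 * δ + 0.4 * (ε + 16 * (d * β)))) *
        (d^2 * ∑ k, m3 μ ξ k) := by
  have hbr : ∀ z, BM fun ω => ramp z ε (WW μ ξ ω) := fun z =>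
    H.bmW.comp (ramp_cont z ε).measurable (C := 1)
      fun x => by rw [abs_of_nonneg (ramp_nonneg _ _ _)]; exact ramp_le_one _ _ _
  have u1 := (abs_le.mp (H.smooth t ε hε δ hδ)).2
  have l1 := (abs_le.mp (H.smooth (t - ε) ε hε δ hδ)).1
  have u2 := ramp_upper t ε hε
  have l2 := ramp_lower (t - ε) ε hε
  rw [sub_add_cancel] at l2
  have hi := ind_bm H.bmW (measurableSet_Iic (a := t))
  have u3 : (μ {ω | WW μ ξ ω ≤ t}).toReal ≤ ∫ ω, ramp t ε (WW μ ξ ω) ∂μ := by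
    rw [cdf_ind H.bmW]
    refine integral_mono (hi.integrable μ) ((hbr t).integrable μ) fun ω => ?_
    by_cases hx : WW μ ξ ω ∈ Set.Iic t
    · simp only [Set.indicator_of_mem hx]
      rw [ramp_left t ε _ hε hx]
    · simp only [Set.indicator_of_notMem hx]
      exact ramp_nonneg _ _ _
  have l3 : ∫ ω, ramp (t - ε) ε (WW μ ξ ω) ∂μ ≤ (μ {ω | WW μ ξ ω ≤ t}).toReal := by
    rw [cdf_ind H.bmW]
    refine integral_mono ((hbr (t - ε)).integrable μ) (hi.integrable μ) fun ω => ?_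
    by_cases hx : WW μ ξ ω ∈ Set.Iic t
    · simp only [Set.indicator_of_mem hx]
      exact ramp_le_one _ _ _
    · simp only [Set.indicator_of_notMem hx]
      rw [ramp_right (t - ε) ε _ hε]
      have : t < WW μ ξ ω := not_le.mp hx
      linarith
  refine abs_le.mpr ⟨by linarith, by linarith⟩

lemma kol_bdd (f : Ω → ℝ) (t : ℝ) : |(μ {ω | f ω ≤ t}).toReal - gcdf t| ≤ 1 := by
  have h1 : (μ {ω | f ω ≤ t}).toReal ≤ 1 := ENNReal.toReal_mono ENNReal.one_ne_top prob_le_one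
  have h2 : gcdf t ≤ 1 := ENNReal.toReal_mono ENNReal.one_ne_top prob_le_one
  have h3 : 0 ≤ (μ {ω | f ω ≤ t}).toReal := ENNReal.toReal_nonneg
  have h4 : 0 ≤ gcdf t := ENNReal.toReal_nonneg
  exact abs_le.mpr ⟨by linarith, by linarith⟩

lemma Core.final (H : Core μ ξ nb β d) :
    dKolNormal μ (WW μ ξ) ≤ max (68.5 * (d^2 * ∑ k, m3 μ ξ k)) (22.88 * (d * β)) := by
  have hbd : 0 < d * β := mul_pos H.hd H.hβ
  have hm3 : 0 ≤ d^2 * ∑ k, m3 μ ξ k :=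
    mul_nonneg (sq_nonneg _) (Finset.sum_nonneg fun k _ => m3_nonneg k)
  set δ := dKolNormal μ (WW μ ξ) with hδd
  have hδ : ∀ t, |(μ {ω | WW μ ξ ω ≤ t}).toReal - gcdf t| ≤ δ := fun t =>
    le_ciSup (f := fun t => |(μ {ω | WW μ ξ ω ≤ t}).toReal - gcdf t|)
      ⟨1, by rintro _ ⟨s, rfl⟩; exact kol_bdd _ s⟩ t
  have hδ1 : δ ≤ 1 := ciSup_le fun t => kol_bdd (μ := μ) (WW μ ξ) t
  have hδ0 : 0 ≤ δ := (abs_nonneg _).trans (hδ 0)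
  have hstep : ∀ ε, 0 < ε → δ ≤ 0.2 * ε +
      10 * (2.26 + 8 * (d * β) + (1/ε) * (2 * δ + 0.4 * (ε + 16 * (d * β)))) *
        (d^2 * ∑ k, m3 μ ξ k) := fun ε hε => ciSup_le fun t => H.step ε hε δ hδ t
  set a := d^2 * ∑ k, m3 μ ξ k
  set b := d * β
  set M := max (68.5 * a) (22.88 * b) with hM
  have ha : 68.5 * a ≤ M := le_max_left _ _
  have hb : 22.88 * b ≤ M := le_max_right _ _
  have hM0 : 0 < M := by nlinarith
  by_contra hcon
  have hcon : M < δ := not_le.mp hcon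
  have hs := hstep (1.3 * M) (by positivity)
  set x := δ / M with hx
  have hxM : δ = x * M := by rw [hx]; field_simp
  have hx1 : 1 < x := by rw [hx, lt_div_iff₀ hM0]; linarith
  have hM1 : M < 1 := by linarith
  have hK : 2.26 + 8 * b + (1/(1.3 * M)) * (2 * δ + 0.4 * (1.3 * M + 16 * b)) ≤
      2.26 + 8/22.88 + (1/1.3) * (2 * x + 0.4 * (1.3 + 16/22.88)) := by
    have hb' : b ≤ M / 22.88 := by rw [le_div_iff₀ (by norm_num)]; linarith
    have h1 : (1/(1.3 * M)) * (2 * δ + 0.4 * (1.3 * M + 16 * b)) ≤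
        (1/(1.3 * M)) * (2 * (x * M) + 0.4 * (1.3 * M + 16 * (M / 22.88))) := by
      rw [hxM]
      refine mul_le_mul_of_nonneg_left ?_ (by positivity)
      linarith
    have h2 : (1/(1.3 * M)) * (2 * (x * M) + 0.4 * (1.3 * M + 16 * (M / 22.88))) =
        (1/1.3) * (2 * x + 0.4 * (1.3 + 16/22.88)) := by
      field_simp
    have h3 : 8 * b ≤ 8 / 22.88 := by linarith
    linarith
  have ha' : a ≤ M / 68.5 := by rw [le_div_iff₀ (by norm_num)]; linarith
  set R := 2.26 + 8/22.88 + (1/1.3) * (2 * x + 0.4 * (1.3 + 16/22.88)) with hR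
  have hR0 : 0 ≤ R := by rw [hR]; positivity
  have h5 : x * M ≤ (0.26 + 10 * R / 68.5) * M := by
    have := mul_le_mul hK ha' hm3 hR0
    rw [← hxM]
    calc δ ≤ _ := hs
      _ ≤ 0.2 * (1.3 * M) + 10 * (R * (M / 68.5)) := by linarith
      _ = _ := by ring
  have h6 := le_of_mul_le_mul_right h5 hM0
  rw [hR] at h6
  norm_num at h6
  linarith

end core

/-- Theorem 2.1 of the paper: Berry–Esseen bound for bounded random variables with a
dependency graph. -/
theorem berry_esseen_dependency_bounded
    {Ω V : Type*} [MeasurableSpace Ω] [Fintype V] [Nonempty V]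
    (μ : Measure Ω) [IsProbabilityMeasure μ]
    (Y : V → Ω → ℝ) (hYmeas : ∀ k, Measurable (Y k))
    (G : SimpleGraph V) [DecidableRel G.Adj]
    (hG : IsDependencyGraph μ G Y)
    (D : ℕ) (hD : ∀ k, G.degree k ≤ D)
    (c : V → ℝ)
    (L : ℝ) (hL : 0 < L)
    (hbdd : ∀ k, ∀ᵐ ω ∂μ, |Y k ω - c k| ≤ L)
    (S : Ω → ℝ) (hS : S = fun ω => ∑ k, Y k ω)
    (v : ℝ) (hv : v = Real.sqrt (variance S μ)) (hvpos : 0 < v)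
    (W : Ω → ℝ) (hW : W = fun ω => (S ω - ∫ ω', S ω' ∂μ) / v)
    (A₃ : ℝ) (hA₃ : A₃ = ∑ k, ∫ ω, |Y k ω - c k| ^ 3 ∂μ) :
    dKolNormal μ W ≤
      max (68.5 * (D + 1 : ℝ) ^ 2 * A₃ / v ^ 3) (22.88 * L * (D + 1 : ℝ) / v) := by
  classical
  set nb : V → Finset V := fun k => Finset.univ.filter (fun l => l = k ∨ G.Adj k l) with hnb
  set g : V → ℝ → ℝ := fun k y => max (-L) (min L (y - c k)) / v with hg
  set ξ : V → Ω → ℝ := fun k ω => g k (Y k ω) with hξ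
  have hgm : ∀ k, Measurable (g k) := fun k => by simp only [hg]; fun_prop
  have hae : ∀ k, ∀ᵐ ω ∂μ, ξ k ω = (Y k ω - c k) / v := fun k => by
    filter_upwards [hbdd k] with ω hω
    have := abs_le.mp hω
    simp only [hξ, hg]
    rw [min_eq_right this.2, max_eq_right this.1]
  have hYi : ∀ k, Integrable (Y k) μ := fun k => by
    refine Integrable.of_bound (hYmeas k).aestronglyMeasurable (L + |c k|) ?_
    filter_upwards [hbdd k] with ω hω
    rw [Real.norm_eq_abs]
    calc |Y k ω| = |(Y k ω - c k) + c k| := by ring_nf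
      _ ≤ |Y k ω - c k| + |c k| := abs_add_le _ _
      _ ≤ _ := by linarith
  have hξint : ∀ k, ∫ ω, ξ k ω ∂μ = (∫ ω, Y k ω ∂μ - c k) / v := fun k => by
    rw [integral_congr_ae (hae k), integral_div, integral_sub (hYi k) (integrable_const _)]
    simp
  have hWae : ∀ᵐ ω ∂μ, WW μ ξ ω = W ω := by
    have : ∀ᵐ ω ∂μ, ∀ k, ξ k ω = (Y k ω - c k) / v := ae_all_iff.mpr hae
    filter_upwards [this] with ω hω
    rw [hW, hS]
    simp only [WW]
    rw [integral_finsetSum _ fun k _ => hYi k, ← Finset.sum_sub_distrib, Finset.sum_div]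
    refine Finset.sum_congr rfl fun k _ => ?_
    rw [hω k, hξint k]
    ring
  have hSm : Measurable S := by
    rw [hS]
    exact Finset.measurable_sum _ fun k _ => hYmeas k
  have hvar : ∫ ω, WW μ ξ ω * WW μ ξ ω ∂μ = 1 := by
    have e1 : ∫ ω, WW μ ξ ω * WW μ ξ ω ∂μ = ∫ ω, (S ω - ∫ ω', S ω' ∂μ)^2 / v^2 ∂μ := by
      refine integral_congr_ae ?_
      filter_upwards [hWae] with ω hω
      rw [hω, hW]
      simp only
      ring
    have e2 : v^2 = variance S μ := by rw [hv]; exact Real.sq_sqrt (variance_nonneg _ _)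
    rw [e1, integral_div, ← variance_eq_integral hSm.aemeasurable, ← e2]
    exact div_self (by positivity)
  have hmem : ∀ k l, l ∈ nb k ↔ l = k ∨ G.Adj k l := fun k l => by simp [hnb]
  have hcore : Core μ ξ nb (L / v) (D + 1 : ℝ) := by
    refine ⟨fun k => (hgm k).comp (hYmeas k), fun k ω => ?_, by positivity, by positivity,
      fun k => ?_, fun k l => ?_, fun k j l => ?_, hvar⟩
    · simp only [hξ, hg]
      rw [abs_div, abs_of_pos hvpos]
      refine div_le_div_of_nonneg_right (abs_le.mpr ⟨le_max_left _ _, max_le (by linarith) (min_le_left _ _)⟩) hvpos.le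
    · have h1 : nb k ⊆ insert k (G.neighborFinset k) := by
        intro l hl
        rw [hmem] at hl
        rw [Finset.mem_insert, SimpleGraph.mem_neighborFinset]
        exact hl
      have h2 := (Finset.card_le_card h1).trans (Finset.card_insert_le _ _)
      rw [SimpleGraph.card_neighborFinset_eq_degree] at h2
      have h3 : (nb k).card ≤ D + 1 := h2.trans (by have := hD k; omega)
      exact_mod_cast h3
    · rw [hmem, hmem, G.adj_comm, eq_comm]
    · set s := Finset.univ \ (nb k ∪ nb j ∪ nb l) with hs
      have hk : ∀ i ∈ ({k, j, l} : Set V), ∀ m ∈ (s : Set V), m ∉ nb i := by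
        intro i hi m hm
        simp only [hs, Finset.coe_sdiff, Set.mem_sdiff, Finset.coe_union, Set.mem_union,
          Finset.mem_coe, not_or] at hm
        rcases hi with rfl | rfl | rfl
        · exact hm.2.1.1
        · exact hm.2.1.2
        · exact hm.2.2
      have hind := hG ({k, j, l} : Set V) (s : Set V)
        (Set.disjoint_left.mpr fun i hi hi2 => hk i hi i hi2 ((hmem _ _).mpr (Or.inl rfl)))
        (fun i hi m hm hadj => hk i hi m hm ((hmem _ _).mpr (Or.inr hadj)))
      have hφ : Measurable (fun x : ({k, j, l} : Set V) → ℝ =>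
          (g k (x ⟨k, by simp⟩), g j (x ⟨j, by simp⟩), g l (x ⟨l, by simp⟩))) :=
        ((hgm k).comp (measurable_pi_apply _)).prodMk
          (((hgm j).comp (measurable_pi_apply _)).prodMk ((hgm l).comp (measurable_pi_apply _)))
      have hψ : Measurable (fun x : Set.Elem (s : Set V) → ℝ => ∑ m : (s : Set V), g m.1 (x m)) :=
        Finset.measurable_sum _ fun m _ => (hgm m.1).comp (measurable_pi_apply _)
      have h := hind.comp hφ hψ
      have e : (fun ω => ∑ m ∈ s, ξ m ω) =
          (fun x : Set.Elem (s : Set V) → ℝ => ∑ m : (s : Set V), g m.1 (x m)) ∘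
            (fun ω (m : (s : Set V)) => Y m.1 ω) := by
        funext ω
        simp only [Function.comp, hξ]
        exact (Finset.sum_coe_sort s (fun m => g m (Y m ω))).symm
      rw [e]
      exact h
  have hm3 : ∑ k, m3 μ ξ k = A₃ / v^3 := by
    rw [hA₃, Finset.sum_div]
    refine Finset.sum_congr rfl fun k _ => ?_
    rw [← integral_div]
    refine integral_congr_ae ?_
    filter_upwards [hae k] with ω hω
    rw [hω, abs_div, abs_of_pos hvpos, div_pow]
  have hdk : dKolNormal μ W = dKolNormal μ (WW μ ξ) := by
    unfold dKolNormal
    congr 1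
    funext t
    have : μ {ω | W ω ≤ t} = μ {ω | WW μ ξ ω ≤ t} := by
      refine measure_congr ?_
      filter_upwards [hWae] with ω hω
      exact congrArg (· ≤ t) hω.symm
    rw [this]
  have hfin := hcore.final
  rw [hdk]
  refine hfin.trans (le_of_eq ?_)
  rw [hm3]
  congr 1 <;> ring
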